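/- arXiv:2501.06696 — 3 statements merged into one kernel-verified Lean document; each statement's English description precedes it below -/
import Mathlib

section
/- Let R be a commutative ring with identity and M an R-module. Then M is a nil-M-cyclic module (i.e., there exist r ∈ √Ann_R(M) and x ∈ M with M = Rx + rM) if and only if M is a cyclic module (i.e., M = Rx for some x ∈ M). -/
open Pointwise

/-!
Substituting `M = Rx + rM` into itself gives `M = Rx + r ^ n M` for every `n`, and the second
summand vanishes once `r ^ n` annihilates `M`, so the same `x` generates `M`.
-/

section DistribMulAction

variable {α R M : Type*} [Monoid α] [Semiring R] [AddCommMonoid M] [Module R M]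
  [DistribMulAction α M] [SMulCommClass α R M] {a : α} {N P : Submodule R M}

theorem le_sup_pow_smul_of_le_sup_smul (hN : a • N ≤ N) (hP : P ≤ N ⊔ a • P) (n : ℕ) :
    P ≤ N ⊔ a ^ n • P := by
  induction n with
  | zero => simp
  | succ n ih =>
    calc
      P ≤ N ⊔ a • P := hP
      _ ≤ N ⊔ a • (N ⊔ a ^ n • P) := by gcongr
      _ = N ⊔ a • N ⊔ a ^ (n + 1) • P := by
        rw [Submodule.smul_sup', smul_smul, ← pow_succ', sup_assoc]
      _ = N ⊔ a ^ (n + 1) • P := by rw [sup_eq_left.mpr hN]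

theorem le_of_le_sup_smul_of_pow_smul_le {n : ℕ} (hN : a • N ≤ N) (hP : P ≤ N ⊔ a • P)
    (hn : a ^ n • P ≤ N) : P ≤ N :=
  (le_sup_pow_smul_of_le_sup_smul hN hP n).trans (sup_le le_rfl hn)

end DistribMulAction

section CommSemiring

variable {R M : Type*} [CommSemiring R] [AddCommMonoid M] [Module R M]

theorem eq_top_of_sup_smul_top_eq_top {r : R} {n : ℕ} {N : Submodule R M}
    (hr : ∀ m : M, r ^ n • m = 0) (hN : N ⊔ r • (⊤ : Submodule R M) = ⊤) : N = ⊤ := by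
  have pow_smul_top_le : r ^ n • (⊤ : Submodule R M) ≤ N := by
    rintro _ ⟨m, -, rfl⟩
    simp [hr]
  exact top_le_iff.mp <|
    le_of_le_sup_smul_of_pow_smul_le (N.smul_le_self_of_tower r) hN.ge pow_smul_top_le

theorem nil_cyclic_iff_cyclic_general :
    (∃ r : R, (∃ n : ℕ, 0 < n ∧ ∀ m : M, r ^ n • m = 0) ∧
      ∃ x : M, (⊤ : Submodule R M) = Submodule.span R {x} ⊔ r • (⊤ : Submodule R M)) ↔
    ∃ x : M, (⊤ : Submodule R M) = Submodule.span R {x} := by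
  constructor
  · rintro ⟨r, ⟨n, -, hr⟩, x, hx⟩
    exact ⟨x, (eq_top_of_sup_smul_top_eq_top hr hx.symm).symm⟩
  · rintro ⟨x, hx⟩
    exact ⟨0, ⟨1, one_pos, by simp⟩, x, by simp [← hx]⟩

end CommSemiring

/-- `M` is nil-`M`-cyclic iff `M` is cyclic. -/
theorem nil_cyclic_iff_cyclic {R M : Type*} [CommRing R] [AddCommGroup M] [Module R M] :
    (∃ r : R, (∃ n : ℕ, 0 < n ∧ ∀ m : M, r ^ n • m = 0) ∧
      ∃ x : M, (⊤ : Submodule R M) = Submodule.span R {x} ⊔ r • (⊤ : Submodule R M)) ↔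
    ∃ x : M, (⊤ : Submodule R M) = Submodule.span R {x} :=
  nil_cyclic_iff_cyclic_general
end

section
/- Let R be a commutative ring with identity and M an R-module. If for every submodule N of M the quotient M/N is nil-M-finitely cogenerated, then M is a nil-M-Artinian module. -/
open Pointwise

universe u

/-!
The hypothesis on `N` forces `N ≤ (0 :_M r)`, and this makes `M` Artinian outright. Let `N i` be a
descending chain with intersection `N`, and let `r` be the scalar attached to `N`. Since
`N i ∩ (0 :_M r) = N` for large `i`, multiplication by `r` commutes with the intersection, so
`⋂ r N i = r N = 0`. The scalar `r₀` attached to the zero submodule therefore has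
`r N i ∩ (0 :_M r₀) = 0` for large `i`; as `r₀` acts nilpotently, `r N i = 0`, that is,
`N i ≤ (0 :_M r)`, and so `N i = N`.
-/

section MapIInf

variable {R M M' : Type*} [Ring R] [AddCommGroup M] [Module R M] [AddCommGroup M'] [Module R M']

theorem map_iInf_of_directed_of_inf_ker_le {ι : Sort*} {N : ι → Submodule R M} (f : M →ₗ[R] M')
    (hN : Directed (· ≥ ·) N) {i : ι} (hi : N i ⊓ f.ker ≤ ⨅ j, N j) :
    (⨅ j, N j).map f = ⨅ j, (N j).map f := by
  refine le_antisymm (le_iInf fun j => Submodule.map_mono (iInf_le N j)) fun x hx => ?_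
  rw [Submodule.mem_iInf] at hx
  obtain ⟨y, hy, rfl⟩ := hx i
  refine Submodule.mem_map_of_mem ((Submodule.mem_iInf N).2 fun j => ?_)
  obtain ⟨k, hki, hkj⟩ := hN i j
  obtain ⟨z, hz, hzy⟩ := hx k
  have hsub : y - z ∈ N j :=
    (Submodule.mem_iInf N).1 (hi ⟨sub_mem hy (hki hz), LinearMap.sub_mem_ker_iff.2 hzy.symm⟩) j
  simpa only [sub_add_cancel] using add_mem hsub (hkj hz)

end MapIInf

section TorsionBy

variable {R M : Type*} [CommSemiring R] [AddCommMonoid M] [Module R M] {N : Submodule R M} {r : R}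

theorem smul_eq_bot_iff_le_torsionBy : r • N = ⊥ ↔ N ≤ Submodule.torsionBy R M r :=
  LinearMap.le_ker_iff_map.symm

theorem disjoint_torsionBy_pow (h : Disjoint N (Submodule.torsionBy R M r)) (n : ℕ) :
    Disjoint N (Submodule.torsionBy R M (r ^ n)) := by
  simp only [Submodule.disjoint_def, Submodule.mem_torsionBy_iff] at h ⊢
  induction n with
  | zero => simp
  | succ n ih =>
    intro x hx hrx
    rw [pow_succ, mul_smul] at hrx
    exact h x hx (ih _ (N.smul_mem r hx) hrx)

theorem eq_bot_of_disjoint_torsionBy (hr : r ∈ (Module.annihilator R M).radical)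
    (h : Disjoint N (Submodule.torsionBy R M r)) : N = ⊥ := by
  obtain ⟨n, hn⟩ := hr
  have htop : Submodule.torsionBy R M (r ^ n) = ⊤ :=
    eq_top_iff.2 fun x _ => Module.mem_annihilator.1 hn x
  exact disjoint_top.1 (htop ▸ disjoint_torsionBy_pow h n)

end TorsionBy

section ChainCogenerated

variable {R M : Type*} [CommSemiring R] [AddCommMonoid M] [Module R M] {N : Submodule R M} {r : R}

/-- The finite cogeneration condition on `M/N` with scalar `r`, tested on descending sequences
only; for these a finite subfamily may be replaced by a single term. -/
def IsChainCogenerated (N : Submodule R M) (r : R) : Prop :=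
  ∀ F : ℕ → Submodule R M, Antitone F → ⨅ i, F i = N →
    ∃ t, F t ⊓ Submodule.torsionBy R M r = N

theorem IsChainCogenerated.le_torsionBy (h : IsChainCogenerated N r) :
    N ≤ Submodule.torsionBy R M r := by
  obtain ⟨_, ht⟩ := h (fun _ => N) antitone_const iInf_const
  exact inf_eq_left.1 ht

theorem isChainCogenerated_of_exists_finset
    (h : ∀ (ι : Type u) (F : ι → Submodule R M), N = (⨅ i, F i) →
      ∃ J : Finset ι, N = (⨅ i ∈ J, F i) ⊓ Submodule.torsionBy R M r) :
    IsChainCogenerated N r := by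
  intro F hF hN
  have hlift : N = ⨅ i : ULift.{u} ℕ, F i.down := by rw [iInf_ulift, hN]
  obtain ⟨J, hJ⟩ := h _ _ hlift
  have hinf : F (J.sup ULift.down) ≤ ⨅ i ∈ J, F i.down :=
    le_iInf₂ fun i hi => hF (Finset.le_sup (f := ULift.down) hi)
  refine ⟨J.sup ULift.down, le_antisymm ?_ (le_inf ?_ ?_)⟩
  · exact (inf_le_inf_right _ hinf).trans hJ.ge
  · exact hN ▸ iInf_le F _
  · exact hJ.le.trans inf_le_right

end ChainCogenerated

theorem nil_artinian_of_forall_nil_fcog_general {R M : Type*} [CommRing R] [AddCommGroup M]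
    [Module R M]
    (hbot : ∃ r ∈ (Module.annihilator R M).radical, IsChainCogenerated (⊥ : Submodule R M) r)
    (h : ∀ N : Submodule R M, ∃ r : R, IsChainCogenerated N r) : IsArtinian R M := by
  rw [← monotone_stabilizes_iff_artinian]
  intro F
  let N : ℕ → Submodule R M := OrderDual.ofDual ∘ F
  have hN : Antitone N := F.monotone
  obtain ⟨r, hr⟩ := h (⨅ i, N i)
  obtain ⟨t, ht⟩ := hr N hN rfl
  have hsmul : ⨅ i, r • N i = ⊥ := by
    calc ⨅ i, r • N i = r • ⨅ i, N i :=
          (map_iInf_of_directed_of_inf_ker_le _ hN.directed_ge ht.le).symm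
      _ = ⊥ := smul_eq_bot_iff_le_torsionBy.2 hr.le_torsionBy
  obtain ⟨r₀, hr₀, hcog⟩ := hbot
  obtain ⟨s, hs⟩ := hcog (fun i => r • N i) (fun i j hij => Submodule.map_mono (hN hij)) hsmul
  have htors : N s ≤ Submodule.torsionBy R M r :=
    smul_eq_bot_iff_le_torsionBy.1 (eq_bot_of_disjoint_torsionBy hr₀ (disjoint_iff.2 hs))
  have hmax : N (max t s) ≤ ⨅ i, N i :=
    (le_inf (hN (le_max_left t s)) ((hN (le_max_right t s)).trans htors)).trans ht.le
  exact ⟨max t s, fun m hm => le_antisymm (α := Submodule R M) (hmax.trans (iInf_le N m)) (hN hm)⟩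

/-- If every homomorphic image `M/N` of `M` is nil-`M`-finitely cogenerated, then `M` is a
nil-`M`-Artinian module. -/
theorem nil_artinian_of_forall_nil_fcog {R M : Type*} [CommRing R] [AddCommGroup M] [Module R M]
    (h : ∀ N : Submodule R M, ∃ r : R, (∃ n : ℕ, 0 < n ∧ ∀ m : M, r ^ n • m = 0) ∧
      ∀ (ι : Type u) (F : ι → Submodule R M), N = (⨅ i, F i) →
        ∃ J : Finset ι, N = (⨅ i ∈ J, F i) ⊓ Submodule.torsionBy R M r) :
    ∃ r : R, (∃ n : ℕ, 0 < n ∧ ∀ m : M, r ^ n • m = 0) ∧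
      ∀ N : ℕ → Submodule R M, Antitone N →
        ∃ t : ℕ, ∀ i : ℕ, N t ⊓ Submodule.torsionBy R M r ≤ N (t + i) := by
  have hchain (N : Submodule R M) :
      ∃ r ∈ (Module.annihilator R M).radical, IsChainCogenerated N r := by
    obtain ⟨r, ⟨n, _, hn⟩, hF⟩ := h N
    exact ⟨r, ⟨n, Module.mem_annihilator.2 hn⟩, isChainCogenerated_of_exists_finset hF⟩
  have hartin : IsArtinian R M :=
    nil_artinian_of_forall_nil_fcog_general (hchain ⊥) fun N => (hchain N).imp fun _ => And.right
  refine ⟨0, ⟨1, one_pos, fun m => by simp only [pow_one, zero_smul]⟩, fun N hN => ?_⟩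
  obtain ⟨t, ht⟩ := IsArtinian.monotone_stabilizes ⟨OrderDual.toDual ∘ N, hN⟩
  have hstab (i : ℕ) : N t = N (t + i) := ht (t + i) (Nat.le_add_right t i)
  exact ⟨t, fun i => inf_le_left.trans (hstab i).le⟩
end

section
/- Let R be a commutative ring with identity and M an R-module. Suppose there exists r ∈ √Ann_R(M) such that every non-empty collection of submodules of M of the form K ∩ (0 :_M r) has a minimal element with respect to inclusion. Then for every submodule N of M, the quotient M/N is weakly nil-M-finitely cogenerated. -/
open Pointwise

universe u

/-!
Put `t = (0 :_M r)`. The submodules `K ⊓ t` are exactly those contained in `t`, so the minimality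
hypothesis says that the lattice of submodules of `t` is well-founded. In such a lattice a minimal
finite meet of the `F i ⊓ t` cannot shrink when one more `F i` is added, so it lies below every
`F i`.
-/

theorem wellFoundedLT_Iic_of_exists_minimal {α : Type*} [SemilatticeInf α] {t : α}
    (h : ∀ S : Set α, S.Nonempty → (∀ x ∈ S, ∃ y, x = y ⊓ t) →
      ∃ x ∈ S, ∀ y ∈ S, y ≤ x → y = x) :
    WellFoundedLT (Set.Iic t) := by
  refine ⟨WellFounded.wellFounded_iff_has_min.2 fun S hS => ?_⟩
  obtain ⟨_, ⟨x, hxS, rfl⟩, hmin⟩ := h (Subtype.val '' S) (hS.image _) (by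
    rintro _ ⟨x, -, rfl⟩
    exact ⟨x, (inf_eq_left.2 x.2).symm⟩)
  exact ⟨x, hxS, fun y hyS hlt =>
    hlt.ne (Subtype.ext (hmin y (Set.mem_image_of_mem _ hyS) hlt.le))⟩

theorem weakly_nil_fcog_of_min_general {α ι : Type*} [CompleteLattice α] (t : α)
    [WellFoundedLT (Set.Iic t)] (f : ι → α) :
    ∃ J : Finset ι, (⨅ i ∈ J, f i) ⊓ t = (⨅ i, f i) ⊓ t := by
  let g (i : ι) : Set.Iic t := ⟨f i ⊓ t, inf_le_right⟩
  obtain ⟨J, hJ⟩ : ∃ J : Finset ι, ∀ i, J.inf g ≤ g i := Finset.exists_inf_le g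
  let x : Set.Iic t := ⟨(⨅ i ∈ J, f i) ⊓ t, inf_le_right⟩
  have x_le_inf : x ≤ J.inf g :=
    Finset.le_inf fun i hi => inf_le_inf_right t (iInf₂_le i hi)
  have inf_le_f (i : ι) : (⨅ j ∈ J, f j) ⊓ t ≤ f i :=
    calc
      (⨅ j ∈ J, f j) ⊓ t ≤ f i ⊓ t := x_le_inf.trans (hJ i)
      _ ≤ f i := inf_le_left
  exact ⟨J, le_antisymm (le_inf (le_iInf inf_le_f) inf_le_right)
    (inf_le_inf_right t (le_iInf₂ fun i _ => iInf_le f i))⟩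

/-- If there is `r ∈ √Ann M` such that every non-empty collection of submodules of `M` of the
form `K ∩ (0 :_M r)` has a minimal element, then every homomorphic image `M/N` of `M` is
weakly nil-`M`-finitely cogenerated. -/
theorem weakly_nil_fcog_of_min {R M : Type*} [CommRing R] [AddCommGroup M] [Module R M]
    (h : ∃ r : R, (∃ n : ℕ, 0 < n ∧ ∀ m : M, r ^ n • m = 0) ∧
      ∀ S : Set (Submodule R M), S.Nonempty →
        (∀ X ∈ S, ∃ K : Submodule R M, X = K ⊓ Submodule.torsionBy R M r) →
        ∃ X ∈ S, ∀ Y ∈ S, Y ≤ X → Y = X) :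
    ∀ N : Submodule R M, ∃ r : R, (∃ n : ℕ, 0 < n ∧ ∀ m : M, r ^ n • m = 0) ∧
      ∀ (ι : Type u) (F : ι → Submodule R M), N = (⨅ i, F i) →
        ∃ J : Finset ι, (⨅ i ∈ J, F i) ⊓ Submodule.torsionBy R M r =
          N ⊓ Submodule.torsionBy R M r := by
  obtain ⟨r, hr, hmin⟩ := h
  have := wellFoundedLT_Iic_of_exists_minimal hmin
  exact fun N => ⟨r, hr, fun ι F hN => hN ▸ weakly_nil_fcog_of_min_general _ F⟩
end
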